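/- Let G be a Lie algebra over a field k, let U be a G-module (with action of X ∈ G on u ∈ U written X·u), and let O : U → G be a linear map satisfying O(O(u)·v − O(v)·u) = [O(u), O(v)] for all u, v ∈ U. Then the bilinear operation [u, v] := O(u)·v − O(v)·u makes U into a Lie algebra; in particular the Jacobi identity [[u, v], w] + [[v, w], u] + [[w, u], v] = 0 holds for all u, v, w ∈ U. -/

import Mathlib

/-- **Proposition 2.18.** If `O : U → G` is an `O`-operator on a `G`-module `U`,
then the bracket `[u, v] = O(u)·v − O(v)·u` makes `U` into a Lie algebra; in particular
the Jacobi identity holds. -/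
theorem O_operator_gives_Lie_bracket (k : Type*) [Field k]
    (L : Type*) [LieRing L] [LieAlgebra k L]
    (U : Type*) [AddCommGroup U] [Module k U] [LieRingModule L U] [LieModule k L U]
    (O : U →ₗ[k] L)
    (hO : ∀ u v : U, O (⁅O u, v⁆ - ⁅O v, u⁆) = ⁅O u, O v⁆) :
    let br : U → U → U := fun u v => ⁅O u, v⁆ - ⁅O v, u⁆
    ∀ u v w : U, br (br u v) w + br (br v w) u + br (br w u) v = 0 := by
  intro br u v w
  simp only [br, hO, lie_lie, lie_sub]
  abel
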